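/- arXiv:2009.01580 — 6 statements merged into one kernel-verified Lean document; each statement's English description precedes it below -/
import Mathlib

section
/- Let n ≥ 3 and 2 ≤ k ≤ n−1. Let f : ℂ^n → ℂ^n be a linear automorphism such that for every k-element subset J ⊆ {1,…,n} there exists a k-element subset J' ⊆ {1,…,n} with f(span{e_j : j ∈ J}) = span{e_j : j ∈ J'}. Then there exist a permutation s of {1,…,n} and nonzero scalars λ_1,…,λ_n ∈ ℂ such that f(e_i) = λ_i e_{s(i)} for all i; in particular f permutes the coordinate lines of ℂ^n up to scalars. -/
/-!
A linear equivalence preserves intersections, and intersections of coordinate subspaces are again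
coordinate subspaces. Since `1 ≤ k < n`, the line through `e_i` is the intersection of all
`k`-dimensional coordinate subspaces containing it, so its image is a coordinate subspace. Comparing
ranks, that image is a coordinate line, and the induced map on indices is a bijection because the
images of the `e_i` again form a basis.
-/

open Module Submodule

section

variable {ι ι' R M N : Type*} [Semiring R] [AddCommMonoid M] [Module R M] [AddCommMonoid N]
  [Module R N]

/-- `IsCoordinate b W` says that `W` is a coordinate submodule with respect to the basis `b`: it is
spanned by some of the vectors of `b`. The number of these vectors is left free, so that coordinate
submodules are closed under intersections. -/
def IsCoordinate (b : Basis ι R M) (W : Submodule R M) : Prop :=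
  ∃ s : Set ι, W = span R (b '' s)

lemma span_basis_image_iInter {κ : Type*} (b : Basis ι R M) (s : κ → Set ι) :
    span R (b '' ⋂ k, s k) = ⨅ k, span R (b '' s k) := by
  ext x
  simp only [b.mem_span_image, mem_iInf, Set.subset_iInter_iff]

lemma IsCoordinate.iInf {κ : Type*} {b : Basis ι R M} {W : κ → Submodule R M}
    (hW : ∀ k, IsCoordinate b (W k)) : IsCoordinate b (⨅ k, W k) := by
  choose s hs using hW
  exact ⟨⋂ k, s k, by simp only [hs, span_basis_image_iInter]⟩

lemma iInter_powersetCard_mem_eq_singleton {k : ℕ} (hk : 1 ≤ k) (hkι : k < ENat.card ι) (i : ι) :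
    ⋂ J : {J : Set.powersetCard ι k // i ∈ J}, ((J : Finset ι) : Set ι) = {i} := by
  refine Set.Subset.antisymm (fun j hj ↦ ?_) ?_
  · by_contra hji
    obtain ⟨J, hiJ, hjJ⟩ := Set.powersetCard.exists_mem_notMem hk hkι (Ne.symm hji)
    exact hjJ (Set.mem_iInter.1 hj ⟨J, hiJ⟩)
  · exact Set.singleton_subset_iff.2 (Set.mem_iInter.2 fun J ↦ J.2)

lemma isCoordinate_span_singleton {b : Basis ι R M} {b' : Basis ι' R M} {k : ℕ} (hk : 1 ≤ k)
    (hkι : k < ENat.card ι)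
    (h : ∀ J : Finset ι, J.card = k → IsCoordinate b' (span R (b '' J))) (i : ι) :
    IsCoordinate b' (R ∙ b i) := by
  rw [← Set.image_singleton, ← iInter_powersetCard_mem_eq_singleton hk hkι i,
    span_basis_image_iInter]
  exact IsCoordinate.iInf fun J ↦ h J J.1.2

lemma IsCoordinate.exists_eq_span_singleton [StrongRankCondition R] {b : Basis ι R M}
    {b' : Basis ι' R M} {i : ι} (h : IsCoordinate b' (R ∙ b i)) : ∃ a, (R ∙ b i) = R ∙ b' a := by
  obtain ⟨s, hs⟩ := h
  have hs_card : s.encard = 1 := by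
    rw [← toENat_rank_span_set (b'.linearIndependent.linearIndepOn s), ← hs,
      ← Set.image_singleton, toENat_rank_span_set (b.linearIndependent.linearIndepOn {i}),
      Set.encard_singleton]
  obtain ⟨a, rfl⟩ := Set.encard_eq_one.1 hs_card
  exact ⟨a, by rw [hs, Set.image_singleton]⟩

lemma exists_units_smul_eq_of_span_singleton_eq {x y : M}
    (hx : Function.Injective fun r : R ↦ r • x) (hy : Function.Injective fun r : R ↦ r • y)
    (h : (R ∙ x) = R ∙ y) : ∃ u : Rˣ, x = u • y := by
  obtain ⟨c, hc⟩ := mem_span_singleton.1 (h ▸ mem_span_singleton_self x)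
  obtain ⟨d, hd⟩ := mem_span_singleton.1 (h ▸ mem_span_singleton_self y)
  have hcd : c * d = 1 := hx <| by simp only [mul_smul, hd, hc, one_smul]
  have hdc : d * c = 1 := hy <| by simp only [mul_smul, hd, hc, one_smul]
  exact ⟨⟨c, d, hcd, hdc⟩, hc.symm⟩

lemma smul_basis_injective (b : Basis ι R M) (i : ι) : Function.Injective fun r : R ↦ r • b i :=
  fun r s h ↦ by simpa using DFunLike.congr_fun (congrArg b.repr h) i

lemma exists_equiv_span_singleton_eq [Nontrivial R] {b : Basis ι R M} {b' : Basis ι' R M}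
    (h : ∀ i, ∃ a, (R ∙ b i) = R ∙ b' a) : ∃ e : ι ≃ ι', ∀ i, (R ∙ b i) = R ∙ b' (e i) := by
  choose e he using h
  have he_inj : Function.Injective e := fun i j hij ↦ by
    have hmem : b i ∈ span R (b '' {j}) := by
      rw [Set.image_singleton, he j, ← hij, ← he i]
      exact mem_span_singleton_self _
    exact Set.mem_singleton_iff.1 (b.self_mem_span_image.1 hmem)
  have hspan : span R (b' '' Set.range e) = ⊤ := by
    rw [eq_top_iff, ← b.span_eq, span_le, Set.range_subset_iff]
    intro i
    have hle : (R ∙ b i) ≤ span R (b' '' Set.range e) := by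
      rw [he i, span_singleton_le_iff_mem, b'.self_mem_span_image]
      exact Set.mem_range_self i
    exact hle (mem_span_singleton_self _)
  have he_surj : Function.Surjective e := fun a ↦
    b'.self_mem_span_image.1 (hspan ▸ mem_top)
  exact ⟨Equiv.ofBijective e ⟨he_inj, he_surj⟩, he⟩

theorem stmt0_general [StrongRankCondition R] (b : Basis ι R M) (b' : Basis ι' R N) {k : ℕ}
    (hk : 1 ≤ k) (hkι : k < ENat.card ι) (f : M ≃ₗ[R] N)
    (hf : ∀ J : Finset ι, J.card = k →
      IsCoordinate b' ((span R (b '' J)).map (f : M →ₗ[R] N))) :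
    ∃ (s : ι ≃ ι') (u : ι → Rˣ), ∀ i, f (b i) = u i • b' (s i) := by
  have : Nontrivial R := nontrivial_of_invariantBasisNumber R
  have hfb : ∀ J : Finset ι, J.card = k → IsCoordinate b' (span R (b.map f '' J)) := fun J hJ ↦ by
    simpa only [map_span, ← Set.image_comp, LinearEquiv.coe_coe, Basis.coe_map] using hf J hJ
  obtain ⟨s, hs⟩ := exists_equiv_span_singleton_eq fun i ↦
    (isCoordinate_span_singleton hk hkι hfb i).exists_eq_span_singleton
  choose u hu using fun i ↦ exists_units_smul_eq_of_span_singleton_eq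
    (smul_basis_injective (b.map f) i) (smul_basis_injective b' (s i)) (hs i)
  exact ⟨s, u, hu⟩

end

/-- A linear automorphism of ℂ^n mapping k-dimensional coordinate
subspaces to k-dimensional coordinate subspaces permutes the coordinate lines
up to nonzero scalars. -/
theorem stmt0 (n k : ℕ) (hn : 3 ≤ n) (hk2 : 2 ≤ k) (hkn : k ≤ n - 1)
    (f : (Fin n → ℂ) ≃ₗ[ℂ] (Fin n → ℂ))
    (hf : ∀ J : Finset (Fin n), J.card = k →
      ∃ J' : Finset (Fin n), J'.card = k ∧
        Submodule.map (f : (Fin n → ℂ) →ₗ[ℂ] (Fin n → ℂ))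
          (Submodule.span ℂ ((fun j => Pi.single j (1 : ℂ)) '' (J : Set (Fin n)))) =
        Submodule.span ℂ ((fun j => Pi.single j (1 : ℂ)) '' (J' : Set (Fin n)))) :
    ∃ (s : Equiv.Perm (Fin n)) (lam : Fin n → ℂ), (∀ i, lam i ≠ 0) ∧
      ∀ i, f (Pi.single i (1 : ℂ)) = lam i • (Pi.single (s i) 1 : Fin n → ℂ) := by
  obtain ⟨s, u, h⟩ := stmt0_general (Pi.basisFun ℂ (Fin n)) (Pi.basisFun ℂ (Fin n)) (k := k)
    (by lia) (by rw [ENat.card_eq_coe_fintype_card, Fintype.card_fin]; norm_cast; lia) f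
    fun J hJ ↦ let ⟨J', _, hJ'⟩ := hf J hJ; ⟨J', by simpa only [Pi.basisFun_apply] using hJ'⟩
  exact ⟨s, fun i ↦ u i, fun i ↦ (u i).ne_zero, by simpa [Units.smul_def] using h⟩
end

section
/- Let 1 ≤ k ≤ n−1 and let A be a complex (n−k)×k matrix. Let L be the n×k block matrix with top block the identity I_k and bottom block A, and let L' be the n×(n−k) block matrix with top block −Aᵀ and bottom block the identity I_{n−k}. Then for every k-element subset J ⊆ {1,…,n}, the k×k minor of L on the rows indexed by J equals, up to sign, the (n−k)×(n−k) minor of L' on the rows indexed by the complement J̄ = {1,…,n}∖J; that is, P^J(L) = ±P^{J̄}(L'). -/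
/-- The k×k minor `P^J(M)` of an n×k matrix `M` on the rows indexed by a
k-element subset `J`, the rows being taken in increasing order. -/
noncomputable def minorDet {n k : ℕ} (M : Matrix (Fin n) (Fin k) ℂ) (J : Finset (Fin n))
    (h : J.card = k) : ℂ :=
  (Matrix.of fun a b : Fin k => M (J.orderIsoOfFin h a) b).det

/-!
`L` is the first block column of `M = [[1, 0], [A, 1]]`, and `L'` is the second block column of
`[[1, -Aᵀ], [0, 1]]`, the inverse transpose of `M`. Permute the rows of both matrices so that those
in `J` come first. They stay inverse transposes of each other, and `M` now has determinant `±1`.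
Jacobi's identity then says that a minor of `M` is `±1` times the complementary minor of its
inverse.
-/

section ComplementaryMinors

open Matrix Equiv

variable {R n p q : Type*} [CommRing R] [Fintype n] [DecidableEq n]
  [Fintype p] [DecidableEq p] [Fintype q] [DecidableEq q]

theorem det_toBlocks₁₁_of_mul_eq_one {M N : Matrix (p ⊕ q) (p ⊕ q) R} (h : M * N = 1) :
    M.toBlocks₁₁.det = M.det * N.toBlocks₂₂.det := by
  rw [← fromBlocks_toBlocks M, ← fromBlocks_toBlocks N, fromBlocks_multiply, ← fromBlocks_one,
    fromBlocks_inj] at h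
  obtain ⟨-, h₁₂, -, h₂₂⟩ := h
  have triangular : M * fromBlocks 1 N.toBlocks₁₂ 0 N.toBlocks₂₂ =
      fromBlocks M.toBlocks₁₁ 0 M.toBlocks₂₁ 1 := by
    nth_rw 1 [← fromBlocks_toBlocks M]
    simp only [fromBlocks_multiply, h₁₂, h₂₂, Matrix.mul_one, Matrix.mul_zero, add_zero]
  simpa only [det_mul, det_fromBlocks_zero₂₁, det_fromBlocks_zero₁₂, det_one, one_mul, mul_one]
    using (congrArg det triangular).symm

theorem det_submatrix_inl_of_mul_eq_one {M N : Matrix n n R} (h : M * N = 1) (e f : p ⊕ q ≃ n) :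
    (M.submatrix (e ∘ Sum.inl) (f ∘ Sum.inl)).det =
      (M.submatrix e f).det * (N.submatrix (f ∘ Sum.inr) (e ∘ Sum.inr)).det :=
  det_toBlocks₁₁_of_mul_eq_one (M := M.submatrix e f) (N := N.submatrix f e) <| by
    rw [submatrix_mul_equiv, h, submatrix_one_equiv]

theorem det_submatrix_fromRows_one (A : Matrix q p R) (σ : Perm (p ⊕ q)) :
    ((fromRows 1 A).submatrix (σ ∘ Sum.inl) id).det =
      (Perm.sign σ : ℤ) * ((fromRows (-Aᵀ) 1).submatrix (σ ∘ Sum.inr) id).det := by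
  let M : Matrix (p ⊕ q) (p ⊕ q) R := fromBlocks 1 0 A 1
  let N : Matrix (p ⊕ q) (p ⊕ q) R := fromBlocks 1 (-Aᵀ) 0 1
  have inverse : M * Nᵀ = 1 := by
    simp [M, N, fromBlocks_transpose, fromBlocks_multiply]
  have det_permuted : (M.submatrix σ (Equiv.refl _)).det = (Perm.sign σ : ℤ) := by
    simpa [M] using det_permute σ M
  have left_columns : (fromRows 1 A).submatrix (σ ∘ Sum.inl) id =
      M.submatrix (σ ∘ Sum.inl) Sum.inl := by
    simp only [M, ← fromCols_fromRows_eq_fromBlocks]; rfl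
  have right_columns : (fromRows (-Aᵀ) 1).submatrix (σ ∘ Sum.inr) id =
      N.submatrix (σ ∘ Sum.inr) Sum.inr := by
    simp only [N, ← fromCols_fromRows_eq_fromBlocks]; rfl
  rw [left_columns, right_columns, ← det_permuted, ← det_transpose (N.submatrix _ _),
    transpose_submatrix]
  exact det_submatrix_inl_of_mul_eq_one inverse σ (Equiv.refl _)

theorem stmt2_general {k m : ℕ} (A : Matrix (Fin m) (Fin k) R)
    (L : Matrix (Fin (k + m)) (Fin k) R) (L' : Matrix (Fin (k + m)) (Fin m) R)
    (hL : L = (fromRows 1 A).submatrix finSumFinEquiv.symm id)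
    (hL' : L' = (fromRows (-Aᵀ) 1).submatrix finSumFinEquiv.symm id)
    (J : Finset (Fin (k + m))) (hJ : J.card = k) (hJc : Jᶜ.card = m) :
    (L.submatrix (J.orderEmbOfFin hJ) id).det = (L'.submatrix (Jᶜ.orderEmbOfFin hJc) id).det ∨
      (L.submatrix (J.orderEmbOfFin hJ) id).det =
        -(L'.submatrix (Jᶜ.orderEmbOfFin hJc) id).det := by
  subst hL hL'
  let σ : Perm (Fin k ⊕ Fin m) := (finSumEquivOfFinset hJ hJc).trans finSumFinEquiv.symm
  have minors := det_submatrix_fromRows_one A σ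
  rcases Int.units_eq_one_or (Perm.sign σ) with sign_eq | sign_eq
  · simp only [sign_eq, Units.val_one, Int.cast_one, one_mul] at minors
    exact .inl minors
  · simp only [sign_eq, Units.val_neg, Units.val_one, Int.cast_neg, Int.cast_one,
      neg_one_mul] at minors
    exact .inr minors

end ComplementaryMinors

/-- For the block matrices `L = (I_k; A)` and `L' = (−Aᵀ; I_{n−k})`
(with `n = k + m`), for every k-element subset `J` of the rows we have
`P^J(L) = ± P^{J̄}(L')` where `J̄` is the complement of `J`. -/
theorem stmt2 (k m : ℕ) (hk : 1 ≤ k) (hm : 1 ≤ m)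
    (A : Matrix (Fin m) (Fin k) ℂ)
    (L : Matrix (Fin (k + m)) (Fin k) ℂ)
    (L' : Matrix (Fin (k + m)) (Fin m) ℂ)
    (hL : L = (Matrix.fromRows (1 : Matrix (Fin k) (Fin k) ℂ) A).submatrix
      finSumFinEquiv.symm id)
    (hL' : L' = (Matrix.fromRows (-(A.transpose)) (1 : Matrix (Fin m) (Fin m) ℂ)).submatrix
      finSumFinEquiv.symm id)
    (J : Finset (Fin (k + m))) (hJ : J.card = k) (hJc : Jᶜ.card = m) :
    minorDet L J hJ = minorDet L' Jᶜ hJc ∨ minorDet L J hJ = - minorDet L' Jᶜ hJc :=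
  stmt2_general A L L' hL hL' J hJ hJc
end

section
/- Let n ≥ 4 and let σ be an admissible set for G_{n,2} whose admissible polytope P_σ = conv{e_i+e_j : {i,j} ∈ σ} has affine dimension at most n−3. Then P_σ is contained in the boundary ∂Δ_{n,2}; equivalently, there exists i ∈ {1,…,n} such that either i belongs to no pair of σ (so x_i = 0 on P_σ), or i belongs to every pair of σ (so x_i = 1 on P_σ). -/
/-- The hypersimplex `Δ_{n,k} ⊂ ℝ^n`. -/
def hypersimplex (n k : ℕ) : Set (Fin n → ℝ) :=
  {x | (∀ i, 0 ≤ x i ∧ x i ≤ 1) ∧ ∑ i, x i = (k : ℝ)}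

/-- The Plücker coordinate `P^{ij}(A) = A_{i1}A_{j2} − A_{j1}A_{i2}` of an
n×2 complex matrix. -/
def plucker {n : ℕ} (A : Matrix (Fin n) (Fin 2) ℂ) (i j : Fin n) : ℂ :=
  A i 0 * A j 1 - A j 0 * A i 1

/-- The Plücker support `σ(A) = {{i,j} : P^{ij}(A) ≠ 0}` of an n×2 matrix. -/
def pluckerSupport {n : ℕ} (A : Matrix (Fin n) (Fin 2) ℂ) : Set (Finset (Fin n)) :=
  {p | ∃ i j : Fin n, i ≠ j ∧ p = {i, j} ∧ plucker A i j ≠ 0}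

/-- A set `σ` of 2-element subsets of `{1,…,n}` is admissible for `G_{n,2}`
if it is the Plücker support of some rank-2 complex n×2 matrix. -/
def IsAdmissible {n : ℕ} (σ : Set (Finset (Fin n))) : Prop :=
  ∃ A : Matrix (Fin n) (Fin 2) ℂ, A.rank = 2 ∧ pluckerSupport A = σ

/-- The 0/1 vertex `Λ_p = ∑_{i∈p} e_i` of the hypersimplex associated with a
subset `p` of indices. -/
def vertexOf {n : ℕ} (p : Finset (Fin n)) : Fin n → ℝ :=
  fun i => if i ∈ p then 1 else 0

/-- The admissible polytope `P_σ = conv{e_i + e_j : {i,j} ∈ σ}`. -/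
def admPolytope {n : ℕ} (σ : Set (Finset (Fin n))) : Set (Fin n → ℝ) :=
  convexHull ℝ (vertexOf '' σ)

/-!
The Plücker relation says that an admissible set is the set of bases of a rank-two matroid, so let
`P` be the base polytope of a rank-`k` matroid on `{1,…,n}`, and suppose every element lies in some
base. Fix a base `B`. Each `i` can be completed to a base `B' ⊆ B ∪ {i}`, and `Λ_{B'} - Λ_B` is a
direction of `P` congruent to `e_i` modulo the span of the `e_j` with `j ∈ B`. These directions
together with the `k` vectors `e_j` span `ℝ^n`, so `dim P ≥ n - k`. Hence if `dim P < n - k`, some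
`i` lies in no base, and `P` lies in the face `x_i = 0` of the hypersimplex.
-/

open scoped Topology

section IntrinsicFrontier

variable {E : Type*} [AddCommGroup E] [Module ℝ E] [TopologicalSpace E]
  [IsTopologicalAddGroup E] [ContinuousSMul ℝ E] {s : Set E} {x y : E}

theorem eventually_lineMap_mem_of_mem_intrinsicInterior (hx : x ∈ intrinsicInterior ℝ s)
    (hy : y ∈ affineSpan ℝ s) : ∀ᶠ t in 𝓝 (0 : ℝ), AffineMap.lineMap x y t ∈ s := by
  obtain ⟨z, hz, rfl⟩ := mem_intrinsicInterior.1 hx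
  let line : ℝ → affineSpan ℝ s := fun t =>
    ⟨AffineMap.lineMap (z : E) y t, AffineMap.lineMap_mem t z.2 hy⟩
  have hline : Continuous line := AffineMap.lineMap_continuous.subtype_mk _
  have hline_zero : line 0 = z := Subtype.ext (AffineMap.lineMap_apply_zero _ _)
  have hs : (↑) ⁻¹' s ∈ 𝓝 (line 0) := hline_zero ▸ mem_interior_iff_mem_nhds.1 hz
  exact hline.continuousAt hs

theorem mem_intrinsicFrontier_of_isMinOn {f : E →ᵃ[ℝ] ℝ} (hx : x ∈ s) (hmin : IsMinOn f s x)
    (hy : y ∈ s) (hlt : f x < f y) : x ∈ intrinsicFrontier ℝ s := by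
  rw [← intrinsicClosure_sdiff_intrinsicInterior]
  refine ⟨subset_intrinsicClosure hx, fun hint => ?_⟩
  -- Prolonging the segment from `y` to `x` beyond `x` stays in `s` but decreases `f`.
  have hline := eventually_lineMap_mem_of_mem_intrinsicInterior hint (subset_affineSpan ℝ s hy)
  obtain ⟨t, hts, ht⟩ :=
    ((hline.filter_mono nhdsWithin_le_nhds).and (self_mem_nhdsWithin (s := Set.Iio 0))).exists
  have hle : f x ≤ f (AffineMap.lineMap x y t) := hmin hts
  rw [AffineMap.apply_lineMap, AffineMap.lineMap_apply_ring'] at hle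
  linarith [mul_neg_of_neg_of_pos (Set.mem_Iio.1 ht) (sub_pos.2 hlt)]

end IntrinsicFrontier

section Hypersimplex

variable {n k : ℕ} {σ : Set (Finset (Fin n))} {x : Fin n → ℝ} {i : Fin n}

theorem convex_hypersimplex : Convex ℝ (hypersimplex n k) := by
  have hsum : IsLinearMap ℝ fun x : Fin n → ℝ => ∑ i, x i :=
    ⟨fun x y => Finset.sum_add_distrib, fun c x => (Finset.mul_sum ..).symm⟩
  have hinter : hypersimplex n k = Set.Icc 0 1 ∩ {x | ∑ i, x i = (k : ℝ)} :=
    Set.ext fun x => and_congr_left' forall_and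
  rw [hinter]
  exact (convex_Icc _ _).inter (convex_hyperplane hsum _)

theorem const_mem_hypersimplex (hn : n ≠ 0) (hk : k ≤ n) :
    (fun _ => k / n : Fin n → ℝ) ∈ hypersimplex n k := by
  refine ⟨fun _ => ⟨by positivity, div_le_one_of_le₀ (by exact_mod_cast hk) (by positivity)⟩, ?_⟩
  simp only [Finset.sum_const, Finset.card_univ, Fintype.card_fin, nsmul_eq_mul]
  field_simp

theorem mem_intrinsicFrontier_hypersimplex (hk : 0 < k) (hkn : k ≤ n)
    (hx : x ∈ hypersimplex n k) (hi : x i = 0) :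
    x ∈ intrinsicFrontier ℝ (hypersimplex n k) := by
  have hn : 0 < n := hk.trans_le hkn
  refine mem_intrinsicFrontier_of_isMinOn
    (f := (LinearMap.proj i : (Fin n → ℝ) →ₗ[ℝ] ℝ).toAffineMap) hx (fun y hy => ?_)
    (const_mem_hypersimplex hn.ne' hkn) ?_
  · simpa [hi] using (hy.1 i).1
  · simp only [LinearMap.coe_toAffineMap, LinearMap.proj_apply, hi]
    positivity

theorem vertexOf_mem_hypersimplex (p : Finset (Fin n)) :
    vertexOf p ∈ hypersimplex n p.card := by
  refine ⟨fun j => ?_, by simp [vertexOf]⟩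
  unfold vertexOf
  split_ifs <;> norm_num

theorem admPolytope_subset_hypersimplex (hσ : ∀ p ∈ σ, p.card = k) :
    admPolytope σ ⊆ hypersimplex n k := by
  refine convexHull_min ?_ convex_hypersimplex
  rintro _ ⟨p, hp, rfl⟩
  exact hσ p hp ▸ vertexOf_mem_hypersimplex p

theorem apply_eq_zero_of_mem_admPolytope (hi : ∀ p ∈ σ, i ∉ p) (hx : x ∈ admPolytope σ) :
    x i = 0 := by
  refine convexHull_min (t := {x | x i = 0}) ?_
    (convex_hyperplane (LinearMap.proj i : (Fin n → ℝ) →ₗ[ℝ] ℝ).isLinear 0) hx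
  rintro _ ⟨p, hp, rfl⟩
  exact if_neg (hi p hp)

end Hypersimplex

section Dimension

variable {n : ℕ} {σ : Set (Finset (Fin n))} {p q : Finset (Fin n)} {i : Fin n}

/-- The coordinate subspace of `ℝ^n` spanned by the `e_j` with `j ∈ p`, used as a complement to
the directions of a polytope. -/
def coordinateSpan (p : Finset (Fin n)) : Submodule ℝ (Fin n → ℝ) :=
  Submodule.span ℝ (p.image fun j => Pi.single j (1 : ℝ))

theorem finrank_coordinateSpan_le (p : Finset (Fin n)) :
    Module.finrank ℝ (coordinateSpan p) ≤ p.card :=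
  (finrank_span_finset_le_card _).trans Finset.card_image_le

theorem vertexOf_eq_sum_single (p : Finset (Fin n)) :
    vertexOf p = ∑ j ∈ p, Pi.single j (1 : ℝ) := by
  ext i
  simp [vertexOf, Finset.sum_apply, Pi.single_apply]

theorem vertexOf_mem_coordinateSpan (h : q ⊆ p) : vertexOf q ∈ coordinateSpan p := by
  rw [vertexOf_eq_sum_single]
  exact Submodule.sum_mem _ fun j hj =>
    Submodule.subset_span (Finset.mem_coe.2 (Finset.mem_image_of_mem _ (h hj)))

theorem vertexOf_mem_affineSpan_admPolytope (hp : p ∈ σ) :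
    vertexOf p ∈ affineSpan ℝ (admPolytope σ) :=
  subset_affineSpan ℝ _ (subset_convexHull ℝ _ (Set.mem_image_of_mem _ hp))

theorem single_mem_direction_sup_coordinateSpan (hp : p ∈ σ) (hq : q ∈ σ) (hi : i ∈ q)
    (hqp : q ⊆ insert i p) :
    Pi.single i 1 ∈ (affineSpan ℝ (admPolytope σ)).direction ⊔ coordinateSpan p := by
  have hdir : vertexOf q - vertexOf p ∈ (affineSpan ℝ (admPolytope σ)).direction :=
    AffineSubspace.vsub_mem_direction (vertexOf_mem_affineSpan_admPolytope hq)
      (vertexOf_mem_affineSpan_admPolytope hp)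
  have hcoord : vertexOf p - vertexOf (q.erase i) ∈ coordinateSpan p :=
    sub_mem (vertexOf_mem_coordinateSpan subset_rfl)
      (vertexOf_mem_coordinateSpan (Finset.subset_insert_iff.1 hqp))
  have hsingle : vertexOf q - vertexOf (q.erase i) = Pi.single i 1 := by
    rw [vertexOf_eq_sum_single, vertexOf_eq_sum_single, ← Finset.add_sum_erase q _ hi,
      add_sub_cancel_right]
  rw [← hsingle, ← sub_add_sub_cancel _ (vertexOf p)]
  exact Submodule.add_mem_sup hdir hcoord

theorem card_le_finrank_direction_add_card (hp : p ∈ σ)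
    (hσ : ∀ i, ∃ q ∈ σ, i ∈ q ∧ q ⊆ insert i p) :
    n ≤ Module.finrank ℝ (affineSpan ℝ (admPolytope σ)).direction + p.card := by
  have htop : (affineSpan ℝ (admPolytope σ)).direction ⊔ coordinateSpan p = ⊤ := by
    rw [eq_top_iff, ← (Pi.basisFun ℝ (Fin n)).span_eq, Submodule.span_le]
    rintro _ ⟨i, rfl⟩
    obtain ⟨q, hq, hi, hqp⟩ := hσ i
    rw [Pi.basisFun_apply]
    exact single_mem_direction_sup_coordinateSpan hp hq hi hqp
  calc
    n = Module.finrank ℝ (⊤ : Submodule ℝ (Fin n → ℝ)) := by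
      rw [finrank_top, Module.finrank_fin_fun]
    _ ≤ Module.finrank ℝ (affineSpan ℝ (admPolytope σ)).direction
          + Module.finrank ℝ (coordinateSpan p) :=
      htop ▸ Submodule.finrank_add_le_finrank_add_finrank _ _
    _ ≤ _ := by gcongr; exact finrank_coordinateSpan_le p

end Dimension

section MatroidBases

variable {n k : ℕ} {M : Matroid (Fin n)}

/-- The set of bases of a matroid on `{1,…,n}`, as finsets, so that its `admPolytope` is the
matroid base polytope. Elements outside the ground set `M.E` behave as loops. -/
def baseFinsets (M : Matroid (Fin n)) : Set (Finset (Fin n)) :=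
  {p | M.IsBase p}

theorem baseFinsets_nonempty (M : Matroid (Fin n)) : (baseFinsets M).Nonempty := by
  obtain ⟨B, hB⟩ := M.exists_isBase
  exact ⟨B.toFinite.toFinset, by simpa [baseFinsets] using hB⟩

theorem card_eq_of_mem_baseFinsets (hM : M.eRank = k) {p : Finset (Fin n)}
    (hp : p ∈ baseFinsets M) : p.card = k := by
  have hcard : (p : Set (Fin n)).encard = M.eRank := Matroid.IsBase.encard_eq_eRank hp
  rw [hM, Set.encard_coe_eq_coe_finsetCard] at hcard
  exact_mod_cast hcard

theorem exists_mem_baseFinsets_subset_insert {p q : Finset (Fin n)} {i : Fin n}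
    (hp : p ∈ baseFinsets M) (hq : q ∈ baseFinsets M) (hi : i ∈ q) :
    ∃ r ∈ baseFinsets M, i ∈ r ∧ r ⊆ insert i p := by
  have hindep : M.Indep {i} := Matroid.IsBase.indep hq |>.subset (by simpa using hi)
  obtain ⟨B, hB, hiB, hBp⟩ := hindep.exists_isBase_subset_union_isBase hp
  lift B to Finset (Fin n) using B.toFinite
  refine ⟨B, hB, by simpa using hiB, ?_⟩
  rwa [← Finset.coe_subset, Finset.coe_insert, Set.insert_eq]

theorem exists_forall_mem_baseFinsets_notMem (hM : M.eRank = k)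
    (hdim : Module.finrank ℝ (affineSpan ℝ (admPolytope (baseFinsets M))).direction + k < n) :
    ∃ i, ∀ p ∈ baseFinsets M, i ∉ p := by
  by_contra! hloopless
  obtain ⟨p, hp⟩ := baseFinsets_nonempty M
  have hle := card_le_finrank_direction_add_card hp fun i =>
    let ⟨_, hq, hi⟩ := hloopless i
    exists_mem_baseFinsets_subset_insert hp hq hi
  rw [card_eq_of_mem_baseFinsets hM hp] at hle
  exact hdim.not_ge hle

end MatroidBases

section Plucker

variable {n : ℕ} {A : Matrix (Fin n) (Fin 2) ℂ}

theorem plucker_self (A : Matrix (Fin n) (Fin 2) ℂ) (i : Fin n) : plucker A i i = 0 :=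
  sub_self _

theorem plucker_swap (A : Matrix (Fin n) (Fin 2) ℂ) (i j : Fin n) :
    plucker A j i = -plucker A i j :=
  (neg_sub _ _).symm

theorem plucker_mul_plucker (A : Matrix (Fin n) (Fin 2) ℂ) (a b c d : Fin n) :
    plucker A a b * plucker A c d =
      plucker A a d * plucker A c b - plucker A a c * plucker A d b := by
  simp only [plucker]
  ring

theorem ne_of_plucker_ne_zero {i j : Fin n} (h : plucker A i j ≠ 0) : i ≠ j := by
  rintro rfl
  exact h (plucker_self A i)

theorem exists_plucker_ne_zero (hA : A.rank = 2) : ∃ i j, plucker A i j ≠ 0 := by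
  by_contra! hzero
  have hcols : LinearIndependent ℂ A.col := by
    rw [linearIndependent_iff_card_eq_finrank_span, Set.finrank, ← A.rank_eq_finrank_span_cols,
      hA, Fintype.card_fin]
  -- Vanishing of all minors makes `(A_{i2}, -A_{i1})` a relation between the columns for each `i`.
  have hrow (i : Fin n) : A i 0 = 0 := by
    have hrel : ∑ j, ![A i 1, -A i 0] j • A.col j = 0 := by
      ext l
      simpa [plucker, Fin.sum_univ_two, mul_comm, sub_eq_add_neg] using hzero l i
    simpa using Fintype.linearIndependent_iff.1 hcols _ hrel 1
  exact hcols.ne_zero 0 (funext hrow)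

/-- The bases of the matroid represented by the rows of `A`: the Plücker support of `A`, with
pairs taken as sets as in `Matroid.IsBase`. -/
def IsPluckerBase (A : Matrix (Fin n) (Fin 2) ℂ) (B : Set (Fin n)) : Prop :=
  ∃ i j, plucker A i j ≠ 0 ∧ B = {i, j}

theorem isPluckerBase_coe {p : Finset (Fin n)} :
    IsPluckerBase A p ↔ p ∈ pluckerSupport A := by
  constructor
  · rintro ⟨i, j, hij, hp⟩
    exact ⟨i, j, ne_of_plucker_ne_zero hij, by exact_mod_cast hp, hij⟩
  · rintro ⟨i, j, -, rfl, hij⟩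
    exact ⟨i, j, hij, Finset.coe_pair⟩

theorem exists_mem_pair_plucker_ne_zero {a b c d : Fin n} (hab : plucker A a b ≠ 0)
    (hcd : plucker A c d ≠ 0) : ∃ e ∈ ({c, d} : Set (Fin n)), plucker A e b ≠ 0 := by
  by_contra! h
  have hprod := plucker_mul_plucker A a b c d
  rw [h c (by simp), h d (by simp), mul_zero, mul_zero, sub_zero] at hprod
  exact mul_ne_zero hab hcd hprod

theorem exists_isPluckerBase_insert {a b : Fin n} {Y : Set (Fin n)} (hab : plucker A a b ≠ 0)
    (hY : IsPluckerBase A Y) (ha : a ∉ Y) :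
    ∃ e ∈ Y \ {a, b}, IsPluckerBase A (insert e ({a, b} \ {a})) := by
  obtain ⟨c, d, hcd, rfl⟩ := hY
  obtain ⟨e, he, heb⟩ := exists_mem_pair_plucker_ne_zero hab hcd
  have hea : e ≠ a := fun h => ha (h ▸ he)
  refine ⟨e, ⟨he, by simp [hea, ne_of_plucker_ne_zero heb]⟩, e, b, heb, ?_⟩
  rw [Set.pair_sdiff_left (ne_of_plucker_ne_zero hab)]

theorem exchangeProperty_isPluckerBase (A : Matrix (Fin n) (Fin 2) ℂ) :
    Matroid.ExchangeProperty (IsPluckerBase A) := by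
  rintro _ Y ⟨a, b, hab, rfl⟩ hY _ ⟨rfl | rfl, haY⟩
  · exact exists_isPluckerBase_insert hab hY haY
  · rw [Set.pair_comm]
    exact exists_isPluckerBase_insert (by rwa [plucker_swap, neg_ne_zero]) hY haY

/-- The rank-two matroid on `{1,…,n}` represented by the rows of `A`. -/
def pluckerMatroid (A : Matrix (Fin n) (Fin 2) ℂ) (hA : A.rank = 2) : Matroid (Fin n) :=
  Matroid.ofIsBaseOfFinite Set.finite_univ (IsPluckerBase A)
    (let ⟨i, j, hij⟩ := exists_plucker_ne_zero hA; ⟨{i, j}, i, j, hij, rfl⟩)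
    (exchangeProperty_isPluckerBase A) fun B _ => B.subset_univ

theorem baseFinsets_pluckerMatroid (hA : A.rank = 2) :
    baseFinsets (pluckerMatroid A hA) = pluckerSupport A :=
  Set.ext fun _ => isPluckerBase_coe

theorem eRank_pluckerMatroid (hA : A.rank = 2) : (pluckerMatroid A hA).eRank = 2 := by
  obtain ⟨i, j, hij⟩ := exists_plucker_ne_zero hA
  have hbase : (pluckerMatroid A hA).IsBase {i, j} := ⟨i, j, hij, rfl⟩
  rw [← hbase.encard_eq_eRank, Set.encard_pair (ne_of_plucker_ne_zero hij)]

theorem IsAdmissible.exists_matroid {σ : Set (Finset (Fin n))} (hσ : IsAdmissible σ) :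
    ∃ M : Matroid (Fin n), M.eRank = 2 ∧ baseFinsets M = σ := by
  obtain ⟨A, hA, rfl⟩ := hσ
  exact ⟨pluckerMatroid A hA, eRank_pluckerMatroid hA, baseFinsets_pluckerMatroid hA⟩

end Plucker

theorem stmt6_general {n k : ℕ} (hk : 0 < k) (M : Matroid (Fin n)) (hM : M.eRank = k)
    (hdim : Module.finrank ℝ (affineSpan ℝ (admPolytope (baseFinsets M))).direction + k < n) :
    admPolytope (baseFinsets M) ⊆ intrinsicFrontier ℝ (hypersimplex n k) ∧
    ∃ i : Fin n, ∀ p ∈ baseFinsets M, i ∉ p := by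
  obtain ⟨i, hi⟩ := exists_forall_mem_baseFinsets_notMem hM hdim
  refine ⟨fun x hx => ?_, i, hi⟩
  exact mem_intrinsicFrontier_hypersimplex hk (by omega)
    (admPolytope_subset_hypersimplex (fun _ => card_eq_of_mem_baseFinsets hM) hx)
    (apply_eq_zero_of_mem_admPolytope hi hx)

/-- for n ≥ 4, an admissible polytope of affine dimension ≤ n−3
lies in the boundary of the hypersimplex; equivalently some index belongs to
no pair of σ or to every pair of σ. -/
theorem stmt6 (n : ℕ) (hn : 4 ≤ n) (σ : Set (Finset (Fin n))) (hσ : IsAdmissible σ)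
    (hdim : Module.finrank ℝ (affineSpan ℝ (admPolytope σ)).direction ≤ n - 3) :
    admPolytope σ ⊆ intrinsicFrontier ℝ (hypersimplex n 2) ∧
    ∃ i : Fin n, (∀ p ∈ σ, i ∉ p) ∨ (∀ p ∈ σ, i ∈ p) := by
  obtain ⟨M, hM, rfl⟩ := hσ.exists_matroid
  exact (stmt6_general two_pos M hM (by omega)).imp_right fun ⟨i, hi⟩ => ⟨i, .inl hi⟩
end

section
/- Fix distinct indices i, j ∈ {1,…,n} and a subset S ⊆ {1,…,n}∖{i,j} with 1 ≤ |S| ≤ n−3. Let F ⊆ ℝ^n be the linear span of the vectors e_j − e_s for s ∈ S together with the vectors e_i − e_q for q ∉ S ∪ {i,j}. Then the affine plane (e_i + e_j) + F equals {x ∈ ℝ^n : ∑_{m=1}^n x_m = 2 and x_j + ∑_{s∈S} x_s = 1}; in particular this plane has dimension n−2. -/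
/-!
Put `A = S ∪ {j}`, so that `j ∈ A` and `i ∉ A`. The map `f : x ↦ (∑ m, x m, ∑ m ∈ A, x m)` has the
right inverse `g : (a, b) ↦ (a - b) e_i + b e_j`, hence its kernel is the range of `id - g ∘ f` and
is spanned by the vectors `e_m - g (f e_m)`. These are `e_m - e_j` for `m ∈ A` and `e_m - e_i` for
`m ∉ A`, the edge directions up to sign, together with two zero vectors. So `F = ker f` has
codimension `2`, and `(e_i + e_j) + F` is the fibre of `f` over `f (e_i + e_j) = (2, 1)`.
-/

open Module Submodule

section LinearMap

variable {R M N : Type*} [AddCommGroup M] [AddCommGroup N]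

theorem ker_eq_span_range_sub_of_comp_eq_id [Ring R] [Module R M] [Module R N] {ι : Type*}
    (v : Basis ι R M) {f : M →ₗ[R] N} {g : N →ₗ[R] M} (h : f ∘ₗ g = .id) :
    f.ker = span R (Set.range fun m ↦ g (f (v m)) - v m) := by
  have neg_comp_basis : (fun m ↦ g (f (v m)) - v m) = ⇑(-(.id - g ∘ₗ f)) ∘ v := by
    ext m
    simp
  rw [LinearMap.ker_eq_range_of_comp_eq_id h, ← LinearMap.range_neg, neg_comp_basis,
    Set.range_comp, span_image, v.span_eq, Submodule.map_top]

theorem image_add_left_ker [Semiring R] [Module R M] [Module R N] (f : M →ₗ[R] N) (p : M) :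
    (p + ·) '' (f.ker : Set M) = f ⁻¹' {f p} := by
  ext x
  rw [Set.image_add_left, Set.mem_preimage, SetLike.mem_coe, LinearMap.mem_ker, map_add, map_neg,
    neg_add_eq_zero, Set.mem_preimage, Set.mem_singleton_iff, eq_comm]

theorem finrank_ker_add_finrank_of_comp_eq_id [DivisionRing R] [Module R M] [Module R N]
    [FiniteDimensional R M] {f : M →ₗ[R] N} {g : N →ₗ[R] M} (h : f ∘ₗ g = .id) :
    finrank R f.ker + finrank R N = finrank R M := by
  rw [← f.finrank_range_add_finrank_ker, LinearMap.range_eq_top_of_surjective f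
    (LinearMap.surjective_of_comp_eq_id g f h), finrank_top, add_comm]

end LinearMap

section BlockSums

variable (R : Type*) {ι : Type*} [Semiring R] [Fintype ι]

/-- The pair of linear forms `x ↦ (∑ m, x m, ∑ m ∈ A, x m)`. For `A = S ∪ {j}` its kernel is `F`,
and the affine plane through `e_i + e_j` is its fibre over `(2, 1)`. -/
def blockSums (A : Finset ι) : (ι → R) →ₗ[R] R × R :=
  (∑ m, LinearMap.proj m).prod (∑ m ∈ A, LinearMap.proj m)

variable {R}

@[simp]
theorem blockSums_apply (A : Finset ι) (x : ι → R) :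
    blockSums R A x = (∑ m, x m, ∑ m ∈ A, x m) := by
  simp [blockSums]

theorem blockSums_single [DecidableEq ι] (A : Finset ι) (m : ι) (a : R) :
    blockSums R A (Pi.single m a) = (a, if m ∈ A then a else 0) := by
  simp

end BlockSums

section EdgeDirections

variable (R : Type*) {ι : Type*} [Ring R] [DecidableEq ι]

/-- The vectors `e_k - e_s` for `s ∈ T`: the edge directions of the hypersimplex `Δ_{n,2}` that
exchange `k` for an element of `T`. -/
def edgeDirections (k : ι) (T : Set ι) : Set (ι → R) :=
  (fun s ↦ Pi.single k 1 - Pi.single s 1) '' T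

theorem edgeDirections_insert_self (k : ι) (T : Set ι) :
    edgeDirections R k (insert k T) = insert 0 (edgeDirections R k T) := by
  rw [edgeDirections, Set.image_insert_eq, sub_self, edgeDirections]

end EdgeDirections

section BlockLift

variable (R : Type*) {ι : Type*} [Ring R] [DecidableEq ι]

/-- The linear map `(a, b) ↦ (a - b) e_i + b e_j`, which serves as a right inverse of
`blockSums R A` for `j ∈ A` and `i ∉ A`. -/
def blockLift (i j : ι) : R × R →ₗ[R] ι → R :=
  LinearMap.single R _ i ∘ₗ (LinearMap.fst R R R - LinearMap.snd R R R) +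
    LinearMap.single R _ j ∘ₗ LinearMap.snd R R R

variable {R} in
theorem blockLift_apply (i j : ι) (a b : R) :
    blockLift R i j (a, b) = Pi.single i (a - b) + Pi.single j b := by
  simp [blockLift]

variable [Fintype ι] {i j : ι}

theorem blockSums_comp_blockLift {A : Finset ι} (hi : i ∉ A) (hj : j ∈ A) :
    blockSums R A ∘ₗ blockLift R i j = .id := by
  refine LinearMap.ext fun ⟨a, b⟩ ↦ ?_
  rw [LinearMap.comp_apply, blockLift_apply, map_add, blockSums_single, blockSums_single]
  simp [hi, hj]

theorem blockLift_blockSums_single (A : Finset ι) (m : ι) :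
    blockLift R i j (blockSums R A (Pi.single m 1)) = Pi.single (if m ∈ A then j else i) 1 := by
  rw [blockSums_single, blockLift_apply]
  split_ifs <;> simp

theorem ker_blockSums_eq_span_edgeDirections {A : Finset ι} (hi : i ∉ A) (hj : j ∈ A) :
    (blockSums R A).ker = span R (edgeDirections R j A ∪ edgeDirections R i (Aᶜ : Finset ι)) := by
  rw [ker_eq_span_range_sub_of_comp_eq_id (Pi.basisFun R ι) (blockSums_comp_blockLift R hi hj)]
  simp only [Pi.basisFun_apply, blockLift_blockSums_single]
  rw [← Set.image_univ, ← Set.union_compl_self (A : Set ι), Set.image_union, Finset.coe_compl]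
  congr 2 <;> refine Set.image_congr fun m hm ↦ ?_
  · rw [if_pos (Finset.mem_coe.mp hm)]
  · rw [if_neg (Finset.mem_coe.not.mp hm)]

theorem span_edgeDirections_eq_ker_blockSums (hij : i ≠ j) {S : Finset ι} (hi : i ∉ S) :
    span R (edgeDirections R j S ∪
      edgeDirections R i (Finset.univ \ (S ∪ {i, j}) : Finset ι)) =
      (blockSums R (insert j S)).ker := by
  have compl_insert : (insert j S)ᶜ = insert i (Finset.univ \ (S ∪ {i, j})) := by
    ext m
    by_cases m = i <;> simp_all
  rw [ker_blockSums_eq_span_edgeDirections R (i := i) (by simp [hij, hi])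
    (Finset.mem_insert_self j S), compl_insert, Finset.coe_insert, Finset.coe_insert,
    edgeDirections_insert_self, edgeDirections_insert_self, Set.insert_union, Set.union_insert,
    span_insert_zero, span_insert_zero]

end BlockLift

theorem stmt7_general {K ι : Type*} [DivisionRing K] [Fintype ι] [DecidableEq ι] {i j : ι}
    (hij : i ≠ j) {S : Finset ι} (hiS : i ∉ S) (hjS : j ∉ S) (F : Submodule K (ι → K))
    (hF : F = span K
      (((fun s ↦ Pi.single j (1 : K) - Pi.single s 1) '' (S : Set ι)) ∪
       ((fun q ↦ Pi.single i (1 : K) - Pi.single q 1) ''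
         ((Finset.univ \ (S ∪ {i, j}) : Finset ι) : Set ι)))) :
    ((fun v ↦ (Pi.single i (1 : K) + Pi.single j 1) + v) '' (F : Set (ι → K)) =
      {x : ι → K | (∑ m, x m) = 2 ∧ x j + ∑ s ∈ S, x s = 1}) ∧
    finrank K F = Fintype.card ι - 2 := by
  have hi : i ∉ insert j S := by simp [hij, hiS]
  have hj : j ∈ insert j S := Finset.mem_insert_self j S
  obtain rfl : F = (blockSums K (insert j S)).ker :=
    hF.trans (span_edgeDirections_eq_ker_blockSums K hij hiS)
  constructor
  · have blockSums_vertex :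
        blockSums K (insert j S) (Pi.single i 1 + Pi.single j 1) = (2, 1) := by
      rw [map_add, blockSums_single, blockSums_single, if_neg hi, if_pos hj, Prod.mk_add_mk,
        one_add_one_eq_two, zero_add]
    rw [image_add_left_ker, blockSums_vertex]
    ext x
    simp [Finset.sum_insert hjS]
  · have finrank_ker := finrank_ker_add_finrank_of_comp_eq_id (blockSums_comp_blockLift K hi hj)
    rw [finrank_prod, finrank_self, finrank_fintype_fun_eq_card] at finrank_ker
    exact Nat.eq_sub_of_add_eq finrank_ker

/-- The affine plane through `Λ_{ij} = e_i + e_j` directed by the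
span `F` of the edge vectors `e_j − e_s` (s ∈ S) and `e_i − e_q`
(q ∉ S ∪ {i,j}) equals `{x : ∑ x_m = 2, x_j + ∑_{s∈S} x_s = 1}`, and it has
dimension `n − 2`. -/
theorem stmt7 (n : ℕ) (i j : Fin n) (hij : i ≠ j) (S : Finset (Fin n))
    (hiS : i ∉ S) (hjS : j ∉ S) (hcard : 1 ≤ S.card) (hcard' : S.card ≤ n - 3)
    (F : Submodule ℝ (Fin n → ℝ))
    (hF : F = Submodule.span ℝ
      (((fun s => Pi.single j (1 : ℝ) - Pi.single s 1) '' (S : Set (Fin n))) ∪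
       ((fun q => Pi.single i (1 : ℝ) - Pi.single q 1) ''
         ((Finset.univ \ (S ∪ {i, j}) : Finset (Fin n)) : Set (Fin n))))) :
    ((fun v => (Pi.single i (1 : ℝ) + Pi.single j 1) + v) '' (F : Set (Fin n → ℝ)) =
      {x : Fin n → ℝ | (∑ m, x m) = 2 ∧ x j + ∑ s ∈ S, x s = 1}) ∧
    Module.finrank ℝ F = n - 2 := by
  simpa only [Fintype.card_fin] using stmt7_general hij hiS hjS F hF
end

section
/- Let n ≥ 4 and let S ⊆ {1,…,n} with |S| = p and 2 ≤ p ≤ n−2. The vertices of Δ_{n,2} lying on the hyperplane ∑_{i∈S} x_i = 1 are exactly the points e_i + e_j with exactly one of i, j belonging to S; there are exactly p(n−p) of them, the polytope Δ_{n,2} ∩ {x : ∑_{i∈S} x_i = 1} equals their convex hull, and its set of extreme points is exactly this set of p(n−p) points. -/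
/-!
Splitting the coordinates into those in `S` and those outside `S` exhibits
`Δ_{n,2} ∩ {∑_{i∈S} x_i = 1}` as a Minkowski sum (a product) of two standard simplices, one on `S`
and one on `Sᶜ`; its hull description follows because convex hulls commute with Minkowski sums. The
points `e_i + e_j` are vertices of the cube `[0,1]^n`, which contains the polytope, so they remain
extreme in it.
-/

open Finset
open scoped Pointwise

variable {ι 𝕜 : Type*}

section Field

variable [Field 𝕜] [LinearOrder 𝕜] [IsStrictOrderedRing 𝕜]

theorem left_mem_extremePoints_Icc {a b : 𝕜} (hab : a ≤ b) : a ∈ (Set.Icc a b).extremePoints 𝕜 := by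
  rw [(convex_Icc a b).mem_extremePoints_iff_convex_sdiff, Set.Icc_sdiff_left]
  exact ⟨Set.left_mem_Icc.2 hab, convex_Ioc a b⟩

theorem right_mem_extremePoints_Icc {a b : 𝕜} (hab : a ≤ b) :
    b ∈ (Set.Icc a b).extremePoints 𝕜 := by
  rw [(convex_Icc a b).mem_extremePoints_iff_convex_sdiff, Set.Icc_sdiff_right]
  exact ⟨Set.right_mem_Icc.2 hab, convex_Ico a b⟩

theorem mem_extremePoints_Icc_of_forall_eq_or_eq {a b x : ι → 𝕜} (hab : a ≤ b)
    (hx : ∀ i, x i = a i ∨ x i = b i) : x ∈ (Set.Icc a b).extremePoints 𝕜 := by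
  rw [← Set.pi_univ_Icc, extremePoints_pi]
  intro i _
  rcases hx i with h | h <;> rw [h]
  · exact left_mem_extremePoints_Icc (hab i)
  · exact right_mem_extremePoints_Icc (hab i)

end Field

section Semiring

variable [Fintype ι] [Semiring 𝕜] [PartialOrder 𝕜]

variable (𝕜) in
/-- The section of the hypersimplex `Δ_{n,2}`, with coordinates indexed by `ι` and valued in `𝕜`,
by the hyperplane `∑_{i∈S} x_i = 1`. -/
def hypersimplexSection (S : Finset ι) : Set (ι → 𝕜) :=
  {x | (∀ i, 0 ≤ x i ∧ x i ≤ 1) ∧ ∑ i, x i = 2} ∩ {x | ∑ i ∈ S, x i = 1}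

theorem hypersimplexSection_eq_Icc_inter (S : Finset ι) :
    hypersimplexSection 𝕜 S = Set.Icc 0 1 ∩ {x | ∑ i, x i = 2} ∩ {x | ∑ i ∈ S, x i = 1} := by
  ext x
  simp only [hypersimplexSection, Set.mem_inter_iff, Set.mem_ofPred_eq, Set.mem_Icc, Pi.le_def,
    Pi.zero_apply, Pi.one_apply, forall_and]

theorem convex_hypersimplexSection [IsOrderedRing 𝕜] (S : Finset ι) :
    Convex 𝕜 (hypersimplexSection 𝕜 S) := by
  have convex_sum_eq (T : Finset ι) (r : 𝕜) : Convex 𝕜 {x : ι → 𝕜 | ∑ i ∈ T, x i = r} :=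
    convex_hyperplane ⟨fun _ _ => sum_add_distrib, fun _ _ => (mul_sum _ _ _).symm⟩ r
  rw [hypersimplexSection_eq_Icc_inter]
  exact ((convex_Icc 0 1).inter (convex_sum_eq univ 2)).inter (convex_sum_eq S 1)

end Semiring

section DecidableEq

variable [DecidableEq ι]

variable (𝕜) in
/-- The standard basis vectors `e_i` with `i ∈ s`, that is, the vertices of the standard simplex on
the coordinates in `s`. -/
def basisVectors [Zero 𝕜] [One 𝕜] (s : Set ι) : Set (ι → 𝕜) :=
  (fun i => Pi.single i 1) '' s

theorem basisVectors_add_basisVectors_compl [AddCommMonoidWithOne 𝕜] (s : Set ι) :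
    basisVectors 𝕜 s + basisVectors 𝕜 sᶜ = {x | ∃ i j : ι, i ≠ j ∧
      ((i ∈ s ∧ j ∉ s) ∨ (i ∉ s ∧ j ∈ s)) ∧ x = Pi.single i 1 + Pi.single j 1} := by
  ext x
  constructor
  · rintro ⟨_, ⟨i, hi, rfl⟩, _, ⟨j, hj, rfl⟩, rfl⟩
    exact ⟨i, j, ne_of_mem_of_not_mem hi hj, .inl ⟨hi, hj⟩, rfl⟩
  · rintro ⟨i, j, -, ⟨hi, hj⟩ | ⟨hi, hj⟩, rfl⟩
    · exact Set.add_mem_add (Set.mem_image_of_mem _ hi) (Set.mem_image_of_mem _ hj)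
    · rw [add_comm (Pi.single i 1)]
      exact Set.add_mem_add (Set.mem_image_of_mem _ hj) (Set.mem_image_of_mem _ hi)

theorem ncard_basisVectors_add_basisVectors [AddCommMonoidWithOne 𝕜] [NeZero (1 : 𝕜)]
    {s t : Set ι} (hst : Disjoint s t) :
    (basisVectors 𝕜 s + basisVectors 𝕜 t).ncard = s.ncard * t.ncard := by
  have single_add_single_injOn :
      (s ×ˢ t).InjOn fun q => (Pi.single q.1 1 + Pi.single q.2 1 : ι → 𝕜) := by
    rintro ⟨i, j⟩ ⟨hi, hj⟩ ⟨k, l⟩ ⟨-, hl⟩ h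
    rcases (Pi.single_add_single_eq_single_add_single one_ne_zero one_ne_zero).1 h with
      ⟨hik, hjl⟩ | ⟨-, hil, -⟩ | ⟨-, hij, -⟩
    · exact Prod.ext hik hjl
    · exact (hst.ne_of_mem hi hl hil).elim
    · exact (hst.ne_of_mem hi hj hij).elim
  rw [basisVectors, basisVectors, ← Set.image2_add, Set.image2_image_left, Set.image2_image_right,
    ← Set.image_prod, single_add_single_injOn.ncard_image, Set.ncard_prod]

theorem ite_mem_pair_eq_single_add_single [AddMonoidWithOne 𝕜] {i j : ι} (hij : i ≠ j) :
    (fun k => if k ∈ ({i, j} : Finset ι) then (1 : 𝕜) else 0) =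
      Pi.single i 1 + Pi.single j 1 := by
  ext k
  simp only [mem_insert, mem_singleton, Pi.add_apply, Pi.single_apply]
  grind

theorem sum_single_add_single [AddCommMonoidWithOne 𝕜] (S : Finset ι) (i j : ι) :
    ∑ k ∈ S, (Pi.single i 1 + Pi.single j 1 : ι → 𝕜) k =
      (if i ∈ S then 1 else 0) + if j ∈ S then 1 else 0 := by
  simp only [Pi.add_apply, sum_add_distrib, sum_pi_single']

theorem setOfPred_ite_card_two_sum_eq_one [AddCommMonoidWithOne 𝕜] [CharZero 𝕜] (S : Finset ι) :
    {x : ι → 𝕜 | (∃ J : Finset ι, #J = 2 ∧ x = fun i => if i ∈ J then 1 else 0) ∧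
      ∑ i ∈ S, x i = 1} = basisVectors 𝕜 (S : Set ι) + basisVectors 𝕜 (S : Set ι)ᶜ := by
  rw [basisVectors_add_basisVectors_compl]
  ext x
  constructor
  · rintro ⟨⟨J, hJ, rfl⟩, hsum⟩
    obtain ⟨i, j, hij, rfl⟩ := card_eq_two.1 hJ
    rw [ite_mem_pair_eq_single_add_single hij, sum_single_add_single] at hsum
    refine ⟨i, j, hij, ?_, ite_mem_pair_eq_single_add_single hij⟩
    by_cases hi : i ∈ S <;> by_cases hj : j ∈ S <;> simp_all [one_add_one_eq_two]
  · rintro ⟨i, j, hij, hS, rfl⟩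
    refine ⟨⟨{i, j}, card_pair hij, (ite_mem_pair_eq_single_add_single hij).symm⟩, ?_⟩
    rw [sum_single_add_single]
    rcases hS with h | h <;> simp_all

variable [Field 𝕜] [LinearOrder 𝕜] [IsStrictOrderedRing 𝕜]

theorem indicator_mem_convexHull_basisVectors {S : Finset ι} {x : ι → 𝕜}
    (hx : ∀ i ∈ S, 0 ≤ x i) (hsum : ∑ i ∈ S, x i = 1) :
    (S : Set ι).indicator x ∈ convexHull 𝕜 (basisVectors 𝕜 (S : Set ι)) := by
  have indicator_eq : (S : Set ι).indicator x = ∑ i ∈ S, x i • Pi.single i (1 : 𝕜) := by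
    ext k
    simp [Set.indicator_apply, Finset.sum_apply, Pi.single_apply]
  rw [indicator_eq]
  exact (convex_convexHull 𝕜 _).sum_mem hx hsum fun i hi =>
    subset_convexHull 𝕜 _ (Set.mem_image_of_mem _ hi)

variable [Fintype ι]

theorem basisVectors_add_basisVectors_compl_subset_extremePoints (S : Finset ι) :
    basisVectors 𝕜 (S : Set ι) + basisVectors 𝕜 (S : Set ι)ᶜ ⊆
      (hypersimplexSection 𝕜 S).extremePoints 𝕜 := by
  rw [← setOfPred_ite_card_two_sum_eq_one]
  rintro _ ⟨⟨J, hJ, rfl⟩, hS⟩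
  have mem_extremePoints_cube :=
    mem_extremePoints_Icc_of_forall_eq_or_eq (zero_le_one' (ι → 𝕜))
      fun i => (ite_eq_or_eq (i ∈ J) 1 0).symm
  rw [hypersimplexSection_eq_Icc_inter]
  exact inter_extremePoints_subset_extremePoints_of_subset (fun _ hx => hx.1.1)
    ⟨⟨⟨mem_extremePoints_cube.1, by simp [hJ]⟩, hS⟩, mem_extremePoints_cube⟩

theorem hypersimplexSection_eq_convexHull (S : Finset ι) :
    hypersimplexSection 𝕜 S =
      convexHull 𝕜 (basisVectors 𝕜 (S : Set ι) + basisVectors 𝕜 (S : Set ι)ᶜ) := by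
  refine Set.Subset.antisymm ?_ (convexHull_min
    ((basisVectors_add_basisVectors_compl_subset_extremePoints S).trans extremePoints_subset)
    (convex_hypersimplexSection S))
  rintro x ⟨⟨hx, hsum⟩, hS : ∑ i ∈ S, x i = 1⟩
  have hSc : ∑ i ∈ Sᶜ, x i = 1 := by linarith [sum_add_sum_compl S x]
  rw [convexHull_add, ← Set.indicator_self_add_compl (S : Set ι) x, ← coe_compl]
  exact Set.add_mem_add (indicator_mem_convexHull_basisVectors (fun i _ => (hx i).1) hS)
    (indicator_mem_convexHull_basisVectors (fun i _ => (hx i).1) hSc)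

theorem extremePoints_hypersimplexSection (S : Finset ι) :
    (hypersimplexSection 𝕜 S).extremePoints 𝕜 =
      basisVectors 𝕜 (S : Set ι) + basisVectors 𝕜 (S : Set ι)ᶜ := by
  refine Set.Subset.antisymm ?_ (basisVectors_add_basisVectors_compl_subset_extremePoints S)
  rw [hypersimplexSection_eq_convexHull]
  exact extremePoints_convexHull_subset

theorem stmt9_general (S : Finset ι) (VS : Set (ι → 𝕜))
    (hVS : VS = {x | ∃ i j : ι, i ≠ j ∧ ((i ∈ S ∧ j ∉ S) ∨ (i ∉ S ∧ j ∈ S)) ∧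
      x = Pi.single i 1 + Pi.single j 1}) :
    {x : ι → 𝕜 | (∃ J : Finset ι, #J = 2 ∧ x = fun i => if i ∈ J then 1 else 0) ∧
      ∑ i ∈ S, x i = 1} = VS ∧
    VS.ncard = #S * (Fintype.card ι - #S) ∧
    hypersimplexSection 𝕜 S = convexHull 𝕜 VS ∧
    (hypersimplexSection 𝕜 S).extremePoints 𝕜 = VS := by
  obtain rfl : VS = basisVectors 𝕜 (S : Set ι) + basisVectors 𝕜 (S : Set ι)ᶜ :=
    hVS.trans (basisVectors_add_basisVectors_compl (S : Set ι)).symm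
  refine ⟨setOfPred_ite_card_two_sum_eq_one S, ?_, hypersimplexSection_eq_convexHull S,
    extremePoints_hypersimplexSection S⟩
  rw [ncard_basisVectors_add_basisVectors disjoint_compl_right, ← coe_compl, Set.ncard_coe_finset,
    Set.ncard_coe_finset, card_compl]

end DecidableEq

/-- the vertices of `Δ_{n,2}` on the hyperplane `∑_{i∈S} x_i = 1`
are exactly the points `e_i + e_j` with exactly one of `i, j` in `S`; there are
`p(n−p)` of them, `Δ_{n,2} ∩ {∑_{i∈S} x_i = 1}` is their convex hull, and they
are exactly its extreme points. -/
theorem stmt9 (n p : ℕ) (hn : 4 ≤ n) (S : Finset (Fin n)) (hS : S.card = p)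
    (hp : 2 ≤ p) (hp' : p ≤ n - 2)
    (VS : Set (Fin n → ℝ))
    (hVS : VS = {x | ∃ i j : Fin n, i ≠ j ∧
      ((i ∈ S ∧ j ∉ S) ∨ (i ∉ S ∧ j ∈ S)) ∧
      x = Pi.single i (1 : ℝ) + Pi.single j 1}) :
    ({x : Fin n → ℝ |
        (∃ J : Finset (Fin n), J.card = 2 ∧ x = fun i => if i ∈ J then (1 : ℝ) else 0) ∧
        ∑ i ∈ S, x i = 1} = VS) ∧
    VS.ncard = p * (n - p) ∧
    hypersimplex n 2 ∩ {x | ∑ i ∈ S, x i = 1} = convexHull ℝ VS ∧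
    Set.extremePoints ℝ (hypersimplex n 2 ∩ {x | ∑ i ∈ S, x i = 1}) = VS := by
  simpa only [hypersimplexSection, hypersimplex, Nat.cast_ofNat, hS, Fintype.card_fin] using
    stmt9_general S VS hVS
end

section
/- Let n ≥ 4 and let A and B be complex n×2 matrices of rank 2 with the same Plücker support σ(A) = σ(B) = σ. Suppose the admissible polytope P_σ has affine dimension n−2 and has nonempty intersection with the interior of Δ_{n,2}. Then there exist t ∈ (ℂ^×)^n and g ∈ GL_2(ℂ) such that B = D(t)·A·g, where D(t) is the n×n diagonal matrix with diagonal entries t_1,…,t_n. In other words, the stratum W_σ of G_{n,2} consists of a single orbit of the algebraic torus (ℂ^×)^n, i.e., its space of parameters F_σ = W_σ/(ℂ^×)^n is a point. -/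
section Hypersimplex

theorem pos_of_mem_intrinsicInterior {V P : Type*} [AddCommGroup V] [TopologicalSpace V]
    [Module ℝ V] [ContinuousSMul ℝ V] [TopologicalSpace P] [AddTorsor V P]
    [IsTopologicalAddTorsor P] {s : Set P} {f : P →ᵃ[ℝ] ℝ} (hf : ∀ x ∈ s, 0 ≤ f x)
    {x y : P} (hx : x ∈ intrinsicInterior ℝ s) (hy : y ∈ s) (hfy : 0 < f y) : 0 < f x := by
  have hxs := intrinsicInterior_subset hx
  obtain ⟨z, hz, rfl⟩ := hx
  refine (hf z hxs).lt_of_ne' fun hfz => ?_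
  let γ : ℝ → affineSpan ℝ s := fun t =>
    ⟨AffineMap.lineMap (z : P) y t, AffineMap.lineMap_mem t z.2 (subset_affineSpan ℝ s hy)⟩
  have hγ : Continuous γ := AffineMap.lineMap_continuous.subtype_mk _
  have hγ0 : γ 0 = z := Subtype.ext (AffineMap.lineMap_apply_zero _ _)
  have hnear : ∀ᶠ t in nhds (0 : ℝ), (γ t : P) ∈ s := by
    have hs : ((↑) ⁻¹' s : Set (affineSpan ℝ s)) ∈ nhds (γ 0) :=
      hγ0 ▸ mem_interior_iff_mem_nhds.1 hz
    exact hγ.continuousAt.preimage_mem_nhds hs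
  -- The segment from `y` to `z` can be prolonged beyond `z` inside `s`, where `f` is negative.
  obtain ⟨t, ht, htneg⟩ :=
    ((hnear.filter_mono nhdsWithin_le_nhds).and (self_mem_nhdsWithin (s := Set.Iio 0))).exists
  have hft : f (γ t) = t * f y := by
    simp only [γ, AffineMap.apply_lineMap, AffineMap.lineMap_apply_ring, hfz, mul_zero, zero_add]
  exact (mul_neg_of_neg_of_pos htneg hfy).not_ge (hft ▸ hf _ ht)

variable {n k : ℕ}

theorem comp_perm_mem_hypersimplex {x : Fin n → ℝ} (hx : x ∈ hypersimplex n k)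
    (e : Equiv.Perm (Fin n)) : x ∘ e ∈ hypersimplex n k :=
  ⟨fun i => hx.1 (e i), (Equiv.sum_comp e x).trans hx.2⟩

theorem pos_of_mem_intrinsicInterior_hypersimplex (hk : k ≠ 0) {x : Fin n → ℝ}
    (hx : x ∈ intrinsicInterior ℝ (hypersimplex n k)) (m : Fin n) : 0 < x m := by
  have hxmem := intrinsicInterior_subset hx
  have hsum : ∑ i, x i ≠ 0 := hxmem.2 ▸ Nat.cast_ne_zero.2 hk
  obtain ⟨i, -, hi⟩ := Finset.exists_ne_zero_of_sum_ne_zero hsum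
  have hswap : 0 < (x ∘ Equiv.swap m i) m := by
    rw [Function.comp_apply, Equiv.swap_apply_left]
    exact (hxmem.1 i).1.lt_of_ne' hi
  exact pos_of_mem_intrinsicInterior (f := (LinearMap.proj m : (Fin n → ℝ) →ₗ[ℝ] ℝ).toAffineMap)
    (fun y hy => (hy.1 m).1) hx (comp_perm_mem_hypersimplex hxmem _) hswap

end Hypersimplex

section AdmissiblePolytope

variable {n : ℕ} {σ : Set (Finset (Fin n))}

theorem exists_mem_of_mem_admPolytope {x : Fin n → ℝ} (hx : x ∈ admPolytope σ) {m : Fin n}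
    (hm : x m ≠ 0) : ∃ p ∈ σ, m ∈ p := by
  by_contra! hσ
  have hface : admPolytope σ ⊆ {y | y m = 0} := by
    refine convexHull_min ?_
      ((convex_singleton (0 : ℝ)).linear_preimage (LinearMap.proj m : (Fin n → ℝ) →ₗ[ℝ] ℝ))
    rintro _ ⟨p, hp, rfl⟩
    exact if_neg (hσ p hp)
  exact hm (hface hx)

theorem vertexOf_pair {i j : Fin n} (hij : i ≠ j) :
    vertexOf {i, j} = Pi.single i 1 + Pi.single j 1 := by
  funext k
  simp only [vertexOf, Pi.add_apply, Pi.single_apply, Finset.mem_insert, Finset.mem_singleton]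
  by_cases hi : k = i <;> by_cases hj : k = j <;> simp_all

theorem single_sub_single_mem_direction_admPolytope {a b c : Fin n} (hab : a ≠ b) (hcb : c ≠ b)
    (habσ : {a, b} ∈ σ) (hcbσ : {c, b} ∈ σ) :
    (Pi.single a 1 - Pi.single c 1 : Fin n → ℝ) ∈ (affineSpan ℝ (admPolytope σ)).direction := by
  have hvertex : ∀ p ∈ σ, vertexOf p ∈ affineSpan ℝ (admPolytope σ) := fun p hp =>
    subset_affineSpan ℝ _ (subset_convexHull ℝ _ ⟨p, hp, rfl⟩)
  have hdiff := AffineSubspace.vsub_mem_direction (hvertex _ habσ) (hvertex _ hcbσ)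
  rwa [vertexOf_pair hab, vertexOf_pair hcb, vsub_eq_sub, add_sub_add_right_eq_sub] at hdiff

theorem le_finrank_add_one_of_single_sub_single_mem {K ι : Type*} [DivisionRing K] [Fintype ι]
    [DecidableEq ι] {D : Submodule K (ι → K)} (i : ι)
    (hD : ∀ m, (Pi.single m 1 - Pi.single i 1 : ι → K) ∈ D) :
    Fintype.card ι ≤ Module.finrank K D + 1 := by
  have htop : D ⊔ K ∙ (Pi.single i 1 : ι → K) = ⊤ := by
    rw [eq_top_iff, ← (Pi.basisFun K ι).span_eq, Submodule.span_le]
    rintro _ ⟨m, rfl⟩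
    rw [Pi.basisFun_apply]
    have hm := Submodule.add_mem_sup (hD m) (Submodule.mem_span_singleton_self (Pi.single i 1))
    rwa [sub_add_cancel] at hm
  calc Fintype.card ι = Module.finrank K (⊤ : Submodule K (ι → K)) := by simp
    _ ≤ Module.finrank K D + Module.finrank K (K ∙ (Pi.single i 1 : ι → K)) :=
        htop ▸ Submodule.finrank_add_le_finrank_add_finrank _ _
    _ = Module.finrank K D + 1 := by
        rw [finrank_span_singleton (Pi.single_ne_zero_iff.2 one_ne_zero)]

-- The case `m = j` of `hadj` gives `{j, l} ∈ σ`, so `i`, `j`, `l` form a triangle in `σ`.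
theorem le_finrank_direction_add_one_of_forall_mem_or_mem (hσ : ∀ p ∈ σ, p.card = 2) {i j l : Fin n}
    (hij : {i, j} ∈ σ) (hil : {i, l} ∈ σ) (hadj : ∀ m, {m, j} ∈ σ ∨ {m, l} ∈ σ) :
    n ≤ Module.finrank ℝ (affineSpan ℝ (admPolytope σ)).direction + 1 := by
  have hne : ∀ a b, {a, b} ∈ σ → a ≠ b := fun a b hab =>
    Finset.card_pair_eq_two_iff.1 (hσ _ hab)
  have hmem : ∀ m, (Pi.single m 1 - Pi.single i 1 : Fin n → ℝ) ∈
      (affineSpan ℝ (admPolytope σ)).direction := by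
    intro m
    rcases hadj m with hm | hm
    · exact single_sub_single_mem_direction_admPolytope (hne _ _ hm) (hne _ _ hij) hm hij
    · exact single_sub_single_mem_direction_admPolytope (hne _ _ hm) (hne _ _ hil) hm hil
  simpa only [Fintype.card_fin] using le_finrank_add_one_of_single_sub_single_mem i hmem

end AdmissiblePolytope

section IndependentPairs

/-- The pairs of indices at which a family of vectors is linearly independent. For the rows of a
matrix with two columns this is the Plücker support, over any field. -/
def independentPairs (K : Type*) {ι V : Type*} [DivisionRing K] [AddCommGroup V] [Module K V]
    (v : ι → V) : Set (Finset ι) :=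
  {p | p.card = 2 ∧ LinearIndepOn K v (p : Set ι)}

variable {K ι V : Type*} [DivisionRing K] [AddCommGroup V] [Module K V] {v : ι → V}

theorem ne_zero_of_mem_independentPairs {p : Finset ι} (hp : p ∈ independentPairs K v) {i : ι}
    (hi : i ∈ p) : v i ≠ 0 :=
  hp.2.ne_zero (Finset.mem_coe.2 hi)

variable [DecidableEq ι]

theorem pair_mem_independentPairs_iff {i j : ι} :
    {i, j} ∈ independentPairs K v ↔ LinearIndependent K ![v i, v j] := by
  by_cases hij : i = j
  · subst hij
    have hdep : ¬ LinearIndependent K ![v i, v i] := fun h =>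
      zero_ne_one (h.injective (a₁ := 0) (a₂ := 1) rfl)
    simp [independentPairs, hdep]
  · simp [independentPairs, Finset.card_pair hij, LinearIndepOn.pair_iff v hij,
      LinearIndependent.pair_iff]

theorem exists_smul_eq_of_pair_notMem {i l : ι} (hi : v i ≠ 0) (hl : v l ≠ 0)
    (hil : {i, l} ∉ independentPairs K v) : ∃ s : K, s ≠ 0 ∧ v l = s • v i := by
  rw [pair_mem_independentPairs_iff, LinearIndependent.pair_iff' hi] at hil
  push Not at hil
  obtain ⟨s, hs⟩ := hil
  exact ⟨s, left_ne_zero_of_smul (hs ▸ hl), hs.symm⟩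

theorem pair_mem_or_pair_mem_of_ne_zero {j l m : ι} (hjl : {j, l} ∈ independentPairs K v)
    (hm : v m ≠ 0) : {m, j} ∈ independentPairs K v ∨ {m, l} ∈ independentPairs K v := by
  by_contra! hnot
  have hj : v j ≠ 0 := ne_zero_of_mem_independentPairs hjl (by simp)
  have hl : v l ≠ 0 := ne_zero_of_mem_independentPairs hjl (by simp)
  obtain ⟨a, ha, hja⟩ := exists_smul_eq_of_pair_notMem hm hj hnot.1
  obtain ⟨b, -, hlb⟩ := exists_smul_eq_of_pair_notMem hm hl hnot.2
  rw [pair_mem_independentPairs_iff, LinearIndependent.pair_iff' hj] at hjl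
  refine hjl (b * a⁻¹) ?_
  rw [hja, hlb, smul_smul, inv_mul_cancel_right₀ ha]

end IndependentPairs

theorem plucker_ne_zero_iff {n : ℕ} {A : Matrix (Fin n) (Fin 2) ℂ} {i j : Fin n} :
    plucker A i j ≠ 0 ↔ LinearIndependent ℂ ![A.row i, A.row j] := by
  have hdet : plucker A i j = (Matrix.of ![A.row i, A.row j]).det := by
    rw [Matrix.det_fin_two, plucker, mul_comm (A j 0)]
    rfl
  rw [hdet, ← isUnit_iff_ne_zero, ← Matrix.isUnit_iff_isUnit_det,
    ← Matrix.linearIndependent_rows_iff_isUnit]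
  rfl

theorem pluckerSupport_eq_independentPairs {n : ℕ} (A : Matrix (Fin n) (Fin 2) ℂ) :
    pluckerSupport A = independentPairs ℂ A.row := by
  ext p
  constructor
  · rintro ⟨i, j, -, rfl, hij⟩
    exact pair_mem_independentPairs_iff.2 (plucker_ne_zero_iff.1 hij)
  · intro hp
    obtain ⟨i, j, hij, rfl⟩ := Finset.card_eq_two.1 hp.1
    exact ⟨i, j, hij, rfl, plucker_ne_zero_iff.2 (pair_mem_independentPairs_iff.1 hp)⟩

section TorusEquivalent

variable {K ι κ : Type*} [Field K] [Fintype ι] [DecidableEq ι] [Fintype κ] [DecidableEq κ]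

/-- Two matrices represent points of a Grassmannian (their column spans) in the same orbit of the
algebraic torus, which acts by rescaling the rows. -/
def TorusEquivalent (A B : Matrix ι κ K) : Prop :=
  ∃ t : ι → K, (∀ i, t i ≠ 0) ∧
    ∃ g : Matrix κ κ K, IsUnit g ∧ B = Matrix.diagonal t * A * g

variable {A B C : Matrix ι κ K}

theorem TorusEquivalent.symm (h : TorusEquivalent A B) : TorusEquivalent B A := by
  obtain ⟨t, ht, g, hg, rfl⟩ := h
  refine ⟨t⁻¹, fun i => inv_ne_zero (ht i), g⁻¹, Matrix.isUnit_nonsing_inv_iff.2 hg, ?_⟩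
  have hdiag : Matrix.diagonal t⁻¹ * Matrix.diagonal t = (1 : Matrix ι ι K) := by
    rw [Matrix.diagonal_mul_diagonal, ← Matrix.diagonal_one]
    exact congrArg _ (funext fun i => inv_mul_cancel₀ (ht i))
  rw [← Matrix.mul_assoc,
    Matrix.mul_nonsing_inv_cancel_right _ _ ((Matrix.isUnit_iff_isUnit_det g).1 hg),
    ← Matrix.mul_assoc, hdiag, Matrix.one_mul]

theorem TorusEquivalent.trans (hAB : TorusEquivalent A B) (hBC : TorusEquivalent B C) :
    TorusEquivalent A C := by
  obtain ⟨t, ht, g, hg, rfl⟩ := hAB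
  obtain ⟨s, hs, h, hh, rfl⟩ := hBC
  refine ⟨s * t, fun i => mul_ne_zero (hs i) (ht i), g * h, hg.mul hh, ?_⟩
  have hdiag : Matrix.diagonal (s * t) = Matrix.diagonal s * Matrix.diagonal t :=
    (Matrix.diagonal_mul_diagonal s t).symm
  rw [hdiag]
  simp only [Matrix.mul_assoc]

theorem torusEquivalent_submatrix_one {e : κ → ι} {c : ι → κ}
    (he : LinearIndependent K (A.row ∘ e))
    (hc : ∀ l, ∃ s : K, s ≠ 0 ∧ A.row l = s • A.row (e (c l))) :
    TorusEquivalent ((1 : Matrix κ κ K).submatrix c id) A := by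
  choose s hs hA using hc
  refine ⟨s, hs, A.submatrix e id, Matrix.linearIndependent_rows_iff_isUnit.1 he, ?_⟩
  ext l k
  rw [Matrix.mul_assoc, Matrix.diagonal_mul]
  simpa [Matrix.mul_apply, Matrix.one_apply] using congrFun (hA l) k

open Classical in
theorem torusEquivalent_of_independentPairs_eq {A : Matrix ι (Fin 2) K} {σ : Set (Finset ι)}
    (hσ : independentPairs K A.row = σ) (hA : ∀ l, A.row l ≠ 0) {i j : ι} (hij : {i, j} ∈ σ)
    (htri : ∀ l, {i, l} ∈ σ → {j, l} ∉ σ) :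
    TorusEquivalent
      ((1 : Matrix (Fin 2) (Fin 2) K).submatrix (fun l => if {i, l} ∈ σ then 1 else 0) id) A := by
  subst hσ
  refine torusEquivalent_submatrix_one (e := ![i, j]) ?_ fun l =>
    exists_smul_eq_of_pair_notMem (hA _) (hA l) ?_
  · have hcomp : A.row ∘ ![i, j] = ![A.row i, A.row j] :=
      funext (Fin.forall_fin_two.2 ⟨rfl, rfl⟩)
    exact hcomp ▸ pair_mem_independentPairs_iff.1 hij
  · split_ifs with hil
    · exact htri l hil
    · exact hil

end TorusEquivalent

theorem stmt13_general {K : Type*} [Field K] {n : ℕ} {A B : Matrix (Fin n) (Fin 2) K}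
    {σ : Set (Finset (Fin n))} (hσA : independentPairs K A.row = σ)
    (hσB : independentPairs K B.row = σ) (hcover : ∀ m, ∃ p ∈ σ, m ∈ p)
    (hdim : Module.finrank ℝ (affineSpan ℝ (admPolytope σ)).direction + 2 ≤ n) :
    TorusEquivalent A B := by
  have hrow : ∀ C : Matrix (Fin n) (Fin 2) K, independentPairs K C.row = σ → ∀ m, C.row m ≠ 0 := by
    rintro C rfl m
    obtain ⟨p, hp, hm⟩ := hcover m
    exact ne_zero_of_mem_independentPairs hp hm
  obtain ⟨p, hp, -⟩ := hcover ⟨0, by lia⟩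
  have hcard : ∀ p ∈ σ, p.card = 2 := fun p hp => (hσA ▸ hp : p ∈ independentPairs K A.row).1
  obtain ⟨i, j, -, rfl⟩ := Finset.card_eq_two.1 (hcard p hp)
  have htri : ∀ l, {i, l} ∈ σ → {j, l} ∉ σ := fun l hil hjl => by
    have hadj : ∀ m, {m, j} ∈ σ ∨ {m, l} ∈ σ := fun m => by
      rw [← hσA] at hjl ⊢
      exact pair_mem_or_pair_mem_of_ne_zero hjl (hrow A hσA m)
    have hfull := le_finrank_direction_add_one_of_forall_mem_or_mem hcard hp hil hadj
    lia
  exact (torusEquivalent_of_independentPairs_eq hσA (hrow A hσA) hp htri).symm.trans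
    (torusEquivalent_of_independentPairs_eq hσB (hrow B hσB) hp htri)

/-- if two rank-2 matrices A, B have the same Plücker support σ
and the admissible polytope P_σ has affine dimension n−2 and meets the
intrinsic interior of Δ_{n,2}, then B = D(t)·A·g for some t ∈ (ℂ^×)^n and
g ∈ GL_2(ℂ): the stratum W_σ is a single (ℂ^×)^n-orbit. -/
theorem stmt13 (n : ℕ) (hn : 4 ≤ n) (A B : Matrix (Fin n) (Fin 2) ℂ)
    (hA : A.rank = 2) (hB : B.rank = 2) (σ : Set (Finset (Fin n)))
    (hσA : pluckerSupport A = σ) (hσB : pluckerSupport B = σ)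
    (hdim : Module.finrank ℝ (affineSpan ℝ (admPolytope σ)).direction = n - 2)
    (hint : (admPolytope σ ∩ intrinsicInterior ℝ (hypersimplex n 2)).Nonempty) :
    ∃ t : Fin n → ℂ, (∀ i, t i ≠ 0) ∧
      ∃ g : Matrix (Fin 2) (Fin 2) ℂ, IsUnit g ∧
        B = Matrix.diagonal t * A * g := by
  rw [pluckerSupport_eq_independentPairs] at hσA hσB
  obtain ⟨x, hxσ, hx⟩ := hint
  exact stmt13_general hσA hσB (fun m => exists_mem_of_mem_admPolytope hxσ
    (pos_of_mem_intrinsicInterior_hypersimplex two_ne_zero hx m).ne') (by lia)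
end
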